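/- Let S be a finite set of positive integers and let s be a positive integer with s ∉ S. Then for every finitely supported p : ℕ+ → ℤ, T_{S ∪ {s}} p = T^{(s)}(T_S p); that is, the key operator for S ∪ {s} factors as the composition of the basic-degree operator T^{(s)} with the key operator for S. -/

import Mathlib

/-- The key coefficient function `α_S : ℕ → ℤ` (supported on positive integers),
packaged as a finitely supported function:
`α_S(n) = ∑_{I ⊆ S, I ≠ ∅} (−1)^{|I|} 2^{|I|−1} [n = gcd(I)]`. -/
noncomputable def alphaF (S : Finset ℕ) : ℕ →₀ ℤ :=
  ∑ I ∈ S.powerset.filter (· ≠ ∅),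
    Finsupp.single (I.gcd id) ((-1 : ℤ) ^ I.card * 2 ^ (I.card - 1))

/-- The key operator `T_S` on finitely supported `p : ℕ →₀ ℤ`
(`p` represents the dihedral plaintext `∑_i p(i)(D_i)`):
`(T_S p)(j) = p(j) + 2 ∑_{i ∈ supp p} ∑_{n ∈ supp α_S} p(i) α_S(n) [gcd(i,n) = j]`. -/
noncomputable def keyOp (S : Finset ℕ) (p : ℕ →₀ ℤ) : ℕ →₀ ℤ :=
  p + 2 • ∑ i ∈ p.support, ∑ n ∈ (alphaF S).support,
    Finsupp.single (Nat.gcd i n) (p i * alphaF S n)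

/-- The basic-degree operator `T^{(m)}`:
`(T^{(m)} p)(j) = p(j) − 2 ∑_{i ∈ supp p} p(i) [gcd(i,m) = j]`. -/
noncomputable def basicOp (m : ℕ) (p : ℕ →₀ ℤ) : ℕ →₀ ℤ :=
  p - 2 • ∑ i ∈ p.support, Finsupp.single (Nat.gcd i m) (p i)

theorem basicOp_eq_mapDomain (m : ℕ) (p : ℕ →₀ ℤ) :
    basicOp m p = p - (2 : ℤ) • Finsupp.mapDomain (fun i => Nat.gcd i m) p := by
  unfold basicOp Finsupp.mapDomain Finsupp.sum
  rw [← natCast_zsmul]; rfl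

theorem inner_sum_eq (S : Finset ℕ) (i : ℕ) (a : ℤ) :
    ∑ n ∈ (alphaF S).support, Finsupp.single (Nat.gcd i n) (a * alphaF S n) =
      ∑ I ∈ S.powerset.filter (· ≠ ∅),
        Finsupp.single (Nat.gcd i (I.gcd id)) (a * ((-1 : ℤ) ^ I.card * 2 ^ (I.card - 1))) := by
  change (alphaF S).sum (fun n b => Finsupp.single (Nat.gcd i n) (a * b)) = _
  unfold alphaF
  rw [← Finsupp.sum_finset_sum_index]
  · refine Finset.sum_congr rfl fun I _ => ?_
    rw [Finsupp.sum_single_index]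
    simp
  · intro n; simp
  · intro n b c; rw [mul_add, Finsupp.single_add]

theorem keyOp_eq_sum (S : Finset ℕ) (p : ℕ →₀ ℤ) :
    keyOp S p = ∑ I ∈ S.powerset,
      ((-2 : ℤ) ^ I.card) • Finsupp.mapDomain (fun i => Nat.gcd i (I.gcd id)) p := by
  have h0 : S.powerset.filter (· ≠ ∅) = S.powerset.erase ∅ := by
    ext I; simp [and_comm]
  rw [← Finset.add_sum_erase _ _ (Finset.empty_mem_powerset S), ← h0]
  unfold keyOp
  simp only [inner_sum_eq]
  rw [Finset.sum_comm, Finset.smul_sum]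
  congr 1
  · simp only [Finset.card_empty, pow_zero, one_smul, Finset.gcd_empty, Nat.gcd_zero_right]
    exact Finsupp.mapDomain_id.symm
  · refine Finset.sum_congr rfl fun I hI => ?_
    obtain ⟨k, hk⟩ : ∃ k, I.card = k + 1 :=
      Nat.exists_eq_succ_of_ne_zero (by simpa using (Finset.mem_filter.mp hI).2)
    unfold Finsupp.mapDomain Finsupp.sum
    rw [Finset.smul_sum, Finset.smul_sum, hk]
    refine Finset.sum_congr rfl fun i _ => ?_
    rw [Finsupp.smul_single, Finsupp.smul_single]
    congr 1
    have : (-2 : ℤ) ^ (k + 1) = (-1) ^ (k + 1) * 2 ^ (k + 1) := by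
      rw [← mul_pow]; norm_num
    simp only [smul_eq_mul, nsmul_eq_mul, Nat.add_sub_cancel, this]
    push_cast
    ring

/-- The key operator for `S ∪ {s}` (with `s ∉ S`) factors as the composition of
the basic-degree operator `T^{(s)}` with the key operator for `S`. -/
theorem key_operator_factorization (S : Finset ℕ) (hS : ∀ s ∈ S, 0 < s)
    (s : ℕ) (hs : 0 < s) (hsS : s ∉ S)
    (p : ℕ →₀ ℤ) (hp : ∀ i ∈ p.support, 0 < i) :
    keyOp (insert s S) p = basicOp s (keyOp S p) := by
  rw [basicOp_eq_mapDomain, keyOp_eq_sum, keyOp_eq_sum, Finset.sum_powerset_insert hsS,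
    sub_eq_add_neg, Finsupp.mapDomain_finset_sum, Finset.smul_sum, ← Finset.sum_neg_distrib]
  congr 1
  refine Finset.sum_congr rfl fun I hI => ?_
  have hI' : s ∉ I := fun h => hsS (Finset.mem_powerset.mp hI h)
  rw [Finset.card_insert_of_notMem hI', Finsupp.mapDomain_smul, ← Finsupp.mapDomain_comp,
    smul_smul, ← neg_smul]
  congr 1
  · ring
  · congr 1
    funext i
    simp only [Finset.gcd_insert, Function.comp, id]
    change Nat.gcd i (Nat.gcd s _) = _
    rw [Nat.gcd_comm s, Nat.gcd_assoc]
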